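/- arXiv:2509.19238 — 2 statements merged into one kernel-verified Lean document; each statement's English description precedes it below -/
import Mathlib

section
/- Let A be a unital C*-algebra, J ⊆ A a closed two-sided ideal, and X ⊆ A an operator system. Let π : B(X,J) → B(H) be a unital *-representation such that the restriction π|_{M₂(J)} is nondegenerate. Then π has the unique extension property with respect to S(X,J). -/
noncomputable section

namespace ArvesonCounterexample

/-- The C*-subalgebra of `A` generated by a subset `X`. -/
def cstarGen (A : Type*) [CStarAlgebra A] (X : Set A) : StarSubalgebra ℂ A :=
  (StarAlgebra.adjoin ℂ X).topologicalClosure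

/-- The set `J + ℂ·1`. -/
def unitize (A : Type*) [CStarAlgebra A] (J : Set A) : Set A :=
  {d | ∃ j ∈ J, ∃ c : ℂ, d = j + c • (1 : A)}

/-- The operator system `S(X,J)` inside `M₂(A)`, consisting of the matrices
`[[x, j], [k, b]]` with `x ∈ X`, `j, k ∈ J` and `b ∈ J + ℂ1`. -/
def opSys (A : Type*) [CStarAlgebra A] (X J : Set A) : Set (Matrix (Fin 2) (Fin 2) A) :=
  {m | m 0 0 ∈ X ∧ m 0 1 ∈ J ∧ m 1 0 ∈ J ∧ m 1 1 ∈ unitize A J}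

/-- The C*-algebra `B(X,J)` generated by `S(X,J)` inside `M₂(A)`. -/
def calg (A : Type*) [CStarAlgebra A] (X J : Set A) :
    StarSubalgebra ℂ (Matrix (Fin 2) (Fin 2) A) :=
  (StarAlgebra.adjoin ℂ (opSys A X J)).topologicalClosure

/-- The C*-subalgebra `C*(X) + J` of `A` (the C*-algebra generated by `C*(X)` and `J`;
since `J` is a closed two-sided ideal this coincides with the sum `C*(X) + J`). -/
def cstarPlus (A : Type*) [CStarAlgebra A] (X J : Set A) : StarSubalgebra ℂ A :=
  (StarAlgebra.adjoin ℂ ((cstarGen A X : Set A) ∪ J)).topologicalClosure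

/-- `J` is a closed two-sided ideal of `A`. -/
structure IsClosedTwoSidedIdeal {A : Type*} [CStarAlgebra A] (J : Set A) : Prop where
  zero_mem : (0 : A) ∈ J
  add_mem : ∀ x ∈ J, ∀ y ∈ J, x + y ∈ J
  mul_mem_left : ∀ (a : A), ∀ j ∈ J, a * j ∈ J
  mul_mem_right : ∀ (a : A), ∀ j ∈ J, j * a ∈ J
  isClosed : IsClosed J

/-- `X` is an operator system in `A`: a unital norm-closed self-adjoint subspace. -/
structure IsOperatorSystem {A : Type*} [CStarAlgebra A] (X : Set A) : Prop where
  one_mem : (1 : A) ∈ X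
  add_mem : ∀ x ∈ X, ∀ y ∈ X, x + y ∈ X
  smul_mem : ∀ (c : ℂ), ∀ x ∈ X, c • x ∈ X
  star_mem : ∀ x ∈ X, star x ∈ X
  isClosed : IsClosed X

/-- A map `φ` between star rings is completely positive if each matrix amplification maps
positive elements to positive elements (positivity expressed algebraically as being of the
form `star y * y`). -/
def IsCompletelyPositive {R B : Type*} [Ring R] [StarRing R] [Ring B] [StarRing B]
    (φ : R → B) : Prop :=
  ∀ (n : ℕ) (y : Matrix (Fin n) (Fin n) R),
    ∃ z : Matrix (Fin n) (Fin n) B, (star y * y).map φ = star z * z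

/-- A unital completely positive (linear) map from `R` to `B(H)`. -/
structure IsUCPMap {R : Type*} [Ring R] [Algebra ℂ R] [StarRing R]
    {H : Type*} [NormedAddCommGroup H] [InnerProductSpace ℂ H] [CompleteSpace H]
    (φ : R → (H →L[ℂ] H)) : Prop where
  map_add : ∀ x y, φ (x + y) = φ x + φ y
  map_smul : ∀ (c : ℂ) (x : R), φ (c • x) = c • φ x
  cp : IsCompletelyPositive φ
  map_one : φ 1 = 1

/-- A (not necessarily unital) *-representation of `R` on `B(H)`. -/
structure IsStarRep {R : Type*} [Ring R] [Algebra ℂ R] [StarRing R]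
    {H : Type*} [NormedAddCommGroup H] [InnerProductSpace ℂ H] [CompleteSpace H]
    (π : R → (H →L[ℂ] H)) : Prop where
  map_add : ∀ x y, π (x + y) = π x + π y
  map_smul : ∀ (c : ℂ) (x : R), π (c • x) = c • π x
  map_mul : ∀ x y, π (x * y) = π x * π y
  map_star : ∀ x, π (star x) = star (π x)

/-- A unital *-representation of `R` on `B(H)`. -/
structure IsUnitalStarRep {R : Type*} [Ring R] [Algebra ℂ R] [StarRing R]
    {H : Type*} [NormedAddCommGroup H] [InnerProductSpace ℂ H] [CompleteSpace H]
    (π : R → (H →L[ℂ] H)) : Prop where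
  toIsStarRep : IsStarRep π
  map_one : π 1 = 1

/-- A unital *-representation `ρ` of `B(X,J)` has the unique extension property with respect
to `S(X,J)` if every unital completely positive map on `B(X,J)` agreeing with `ρ` on
`S(X,J)` equals `ρ`. -/
def HasUEP {A : Type*} [CStarAlgebra A] (X J : Set A)
    {H : Type*} [NormedAddCommGroup H] [InnerProductSpace ℂ H] [CompleteSpace H]
    (ρ : ↥(calg A X J) → (H →L[ℂ] H)) : Prop :=
  ∀ Ψ : ↥(calg A X J) → (H →L[ℂ] H), IsUCPMap Ψ →
    (∀ m : ↥(calg A X J), (m : Matrix (Fin 2) (Fin 2) A) ∈ opSys A X J → Ψ m = ρ m) →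
    Ψ = ρ

/-- `ρ` annihilates the ideal `M₂(J)` of `B(X,J)`. -/
def AnnihilatesM2 {A : Type*} [CStarAlgebra A] (X J : Set A)
    {H : Type*} [NormedAddCommGroup H] [InnerProductSpace ℂ H] [CompleteSpace H]
    (ρ : ↥(calg A X J) → (H →L[ℂ] H)) : Prop :=
  ∀ m : ↥(calg A X J), (∀ i j : Fin 2, (m : Matrix (Fin 2) (Fin 2) A) i j ∈ J) → ρ m = 0

/-- `π` (defined on `C*(X)+J`) annihilates `J`. -/
def AnnihilatesJ {A : Type*} [CStarAlgebra A] (X J : Set A)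
    {H : Type*} [NormedAddCommGroup H] [InnerProductSpace ℂ H] [CompleteSpace H]
    (π : ↥(cstarPlus A X J) → (H →L[ℂ] H)) : Prop :=
  ∀ x : ↥(cstarPlus A X J), (x : A) ∈ J → π x = 0

/-- The pair `(ρ, π)` is `(X,J)`-adapted: writing an element of `B(X,J)` as `[[a,b],[c,d]]`
with `a ∈ C*(X)+J`, `b, c ∈ J`, `d ∈ J + ℂ1`, and letting `χ : J + ℂ1 → ℂ` be the quotient
character with kernel `J` (so `χ d = c` exactly when `d - c•1 ∈ J`), one has
`ρ [[a,b],[c,d]] - χ(d)•1 = π (a - χ(d)•1)`. -/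
def IsAdaptedPair {A : Type*} [CStarAlgebra A] (X J : Set A)
    {H : Type*} [NormedAddCommGroup H] [InnerProductSpace ℂ H] [CompleteSpace H]
    (ρ : ↥(calg A X J) → (H →L[ℂ] H)) (π : ↥(cstarPlus A X J) → (H →L[ℂ] H)) : Prop :=
  ∀ (m : ↥(calg A X J)) (c : ℂ) (a' : ↥(cstarPlus A X J)),
    (m : Matrix (Fin 2) (Fin 2) A) 1 1 - c • (1 : A) ∈ J →
    (a' : A) = (m : Matrix (Fin 2) (Fin 2) A) 0 0 - c • (1 : A) →
    ρ m - c • (1 : H →L[ℂ] H) = π a'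

/-- One-sided multiplicative domain of a unital completely positive map. -/
theorem ucp_mul {R : Type*} [Ring R] [Algebra ℂ R] [StarRing R]
    {H : Type*} [NormedAddCommGroup H] [InnerProductSpace ℂ H] [CompleteSpace H]
    (Ψ : R → (H →L[ℂ] H)) (hΨ : IsUCPMap Ψ) (t b : R)
    (h : Ψ (star t * t) = star (Ψ t) * Ψ t) : Ψ (b * t) = Ψ b * Ψ t := by
  obtain ⟨z, hz⟩ := hΨ.cp 3 !![1, t, star b; 0, 0, 0; 0, 0, 0]
  have e : ∀ i j, Ψ ((star !![1, t, star b; 0, 0, 0; 0, 0, 0] *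
      !![1, t, star b; 0, 0, 0; 0, 0, 0] : Matrix (Fin 3) (Fin 3) R) i j)
      = ∑ k, star (z k i) * z k j := by
    intro i j
    have := congrFun (congrFun hz i) j
    simpa [Matrix.mul_apply, Matrix.star_apply] using this
  have e00 := e 0 0
  have e01 := e 0 1
  have e10 := e 1 0
  have e11 := e 1 1
  have e20 := e 2 0
  have e21 := e 2 1
  simp only [Matrix.mul_apply, Matrix.star_apply, Fin.sum_univ_three] at e00 e01 e10 e11 e20 e21
  simp [hΨ.map_one] at e00 e01 e10 e11 e20 e21
  rw [h] at e11
  have hs : ∑ k, star (z k 1 - z k 0 * Ψ t) * (z k 1 - z k 0 * Ψ t) = 0 := by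
    have h10 : star (z 0 1) * z 0 0 + star (z 1 1) * z 1 0 + star (z 2 1) * z 2 0
        = star (Ψ t) := by
      rw [e01]; simp
    have : ∑ k, star (z k 1 - z k 0 * Ψ t) * (z k 1 - z k 0 * Ψ t)
      = (star (z 0 1) * z 0 1 + star (z 1 1) * z 1 1 + star (z 2 1) * z 2 1)
        - (star (z 0 1) * z 0 0 + star (z 1 1) * z 1 0 + star (z 2 1) * z 2 0) * Ψ t
        - star (Ψ t) * (star (z 0 0) * z 0 1 + star (z 1 0) * z 1 1 + star (z 2 0) * z 2 1)
        + star (Ψ t) * (star (z 0 0) * z 0 0 + star (z 1 0) * z 1 0 + star (z 2 0) * z 2 0)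
          * Ψ t := by
      simp only [Fin.sum_univ_three, star_sub, star_mul]
      noncomm_ring
    rw [this, h10, ← e00, ← e01, ← e11]
    noncomm_ring
  have hc : ∀ k, z k 1 - z k 0 * Ψ t = 0 := by
    intro k
    have := (Finset.sum_eq_zero_iff_of_nonneg
      (fun k _ => star_mul_self_nonneg (z k 1 - z k 0 * Ψ t))).1 hs k (Finset.mem_univ k)
    exact (CStarRing.star_mul_self_eq_zero_iff _).1 this
  have hc' : ∀ k, z k 1 = z k 0 * Ψ t := fun k => sub_eq_zero.1 (hc k)
  rw [e21, e20, hc', hc', hc']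
  noncomm_ring

theorem opSys_le_calg {A : Type*} [CStarAlgebra A] (X J : Set A)
    {m : Matrix (Fin 2) (Fin 2) A} (hm : m ∈ opSys A X J) : m ∈ calg A X J :=
  StarSubalgebra.le_topologicalClosure _ (StarAlgebra.subset_adjoin ℂ _ hm)

theorem opSys_col {A : Type*} [CStarAlgebra A] (X J : Set A)
    (hX : IsOperatorSystem X) (hJ : IsClosedTwoSidedIdeal J)
    {m : Matrix (Fin 2) (Fin 2) A} (h00 : m 0 0 = 0) (h10 : m 1 0 = 0)
    (h01 : m 0 1 ∈ J) (h11 : m 1 1 ∈ J) : m ∈ opSys A X J := by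
  refine ⟨?_, h01, ?_, m 1 1, h11, 0, by simp⟩
  · rw [h00]; simpa using hX.smul_mem 0 1 hX.one_mem
  · rw [h10]; exact hJ.zero_mem

/-- Theorem 2.4: if `ρ : B(X,J) → B(H)` is a unital *-representation whose
restriction to the ideal `M₂(J)` is nondegenerate, then `ρ` has the unique extension
property with respect to `S(X,J)`. -/
theorem stmt3 {A : Type*} [CStarAlgebra A] (X J : Set A)
    (hX : IsOperatorSystem X) (hJ : IsClosedTwoSidedIdeal J)
    {H : Type*} [NormedAddCommGroup H] [InnerProductSpace ℂ H] [CompleteSpace H]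
    (ρ : ↥(calg A X J) → (H →L[ℂ] H))
    (hρ : IsUnitalStarRep ρ)
    (hnondeg : closure (Submodule.span ℂ
        {v : H | ∃ (m : ↥(calg A X J)) (ξ : H),
          (∀ i j : Fin 2, (m : Matrix (Fin 2) (Fin 2) A) i j ∈ J) ∧ v = ρ m ξ} : Set H)
      = Set.univ) :
    HasUEP X J ρ := by
  intro Ψ hΨ hag
  have hr := hρ.toIsStarRep
  -- the difference kills the second column of `M₂(J)`
  have key : ∀ (b t : ↥(calg A X J)), t.1 0 0 = 0 → t.1 1 0 = 0 → t.1 0 1 ∈ J → t.1 1 1 ∈ J →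
      (Ψ b - ρ b) * ρ t = 0 := by
    intro b t h00 h10 h01 h11
    have ht : Ψ t = ρ t := hag t (opSys_col X J hX hJ h00 h10 h01 h11)
    have left : ∀ c : ↥(calg A X J), Ψ (c * t) = ρ c * ρ t := by
      intro c
      rw [← hr.map_mul]
      refine hag _ (opSys_col X J hX hJ ?_ ?_ ?_ ?_)
      · simp [Matrix.mul_apply, h00, h10]
      · simp [Matrix.mul_apply, h00, h10]
      · simpa [Matrix.mul_apply] using hJ.add_mem _ (hJ.mul_mem_left _ _ h01) _
          (hJ.mul_mem_left _ _ h11)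
      · simpa [Matrix.mul_apply] using hJ.add_mem _ (hJ.mul_mem_left _ _ h01) _
          (hJ.mul_mem_left _ _ h11)
    have := ucp_mul Ψ hΨ t b (by rw [left, ht, hr.map_star])
    rw [left, ht] at this
    rw [sub_mul, this, sub_self]
  have keym : ∀ (b m : ↥(calg A X J)), (∀ i j : Fin 2, m.1 i j ∈ J) →
      (Ψ b - ρ b) * ρ m = 0 := by
    intro b m hm
    have hw : !![0, m.1 0 1; 0, m.1 1 1] ∈ opSys A X J :=
      opSys_col X J hX hJ (by simp) (by simp) (by simpa using hm 0 1) (by simpa using hm 1 1)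
    have ht : !![0, m.1 0 0; 0, m.1 1 0] ∈ opSys A X J :=
      opSys_col X J hX hJ (by simp) (by simp) (by simpa using hm 0 0) (by simpa using hm 1 0)
    let w : ↥(calg A X J) := ⟨_, opSys_le_calg X J hw⟩
    let t : ↥(calg A X J) := ⟨_, opSys_le_calg X J ht⟩
    have kw := key b w (by simp [w]) (by simp [w]) (by simpa [w] using hm 0 1)
      (by simpa [w] using hm 1 1)
    have kt := key b t (by simp [t]) (by simp [t]) (by simpa [t] using hm 0 0)
      (by simpa [t] using hm 1 0)
    have hu : (m - w) * star (m - w) = t * star t := by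
      apply Subtype.ext
      ext i j
      fin_cases i <;> fin_cases j <;>
        simp [w, t, Matrix.mul_apply, Matrix.star_apply]
    have ku : (Ψ b - ρ b) * ρ (m - w) = 0 := by
      apply (CStarRing.mul_star_self_eq_zero_iff _).1
      rw [star_mul, ← hr.map_star]
      calc _ = (Ψ b - ρ b) * (ρ (m - w) * ρ (star (m - w))) * star (Ψ b - ρ b) := by
            noncomm_ring
        _ = ((Ψ b - ρ b) * ρ t) * ρ (star t) * star (Ψ b - ρ b) := by
            rw [← hr.map_mul, hu, hr.map_mul]; noncomm_ring
        _ = 0 := by rw [kt]; simp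
    have : m = (m - w) + w := by simp
    rw [this, hr.map_add, mul_add, ku, kw, add_zero]
  funext b
  rw [← sub_eq_zero]
  have hd : Dense (Submodule.span ℂ
        {v : H | ∃ (m : ↥(calg A X J)) (ξ : H),
          (∀ i j : Fin 2, (m : Matrix (Fin 2) (Fin 2) A) i j ∈ J) ∧ v = ρ m ξ} : Set H) :=
    dense_iff_closure_eq.2 hnondeg
  refine ContinuousLinearMap.ext_on hd ?_
  rintro v ⟨m, ξ, hm, rfl⟩
  exact congrArg (fun f : H →L[ℂ] H => f ξ) (keym b m hm)

end ArvesonCounterexample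
end
end

section
/- Let A be a unital C*-algebra, J ⊆ A a closed two-sided ideal, and X ⊆ A an operator system. Then: (i) for every unital *-representation Π : B(X,J) → B(H) annihilating M₂(J), there exists a unique *-representation π : C*(X)+J → B(H) annihilating J such that the pair (Π,π) is (X,J)-adapted; (ii) for every unital *-representation π : C*(X)+J → B(H) annihilating J, there exists a unique unital *-representation Π : B(X,J) → B(H) annihilating M₂(J) such that the pair (Π,π) is (X,J)-adapted. -/
noncomputable section

namespace ArvesonCounterexample

section Helpers

variable {A : Type*} [CStarAlgebra A] {X J : Set A}

/-- Every element `j` of a closed two-sided ideal is a limit of products `j * e`, `e ∈ J`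
selfadjoint. -/
lemma ideal_approx (hJ : IsClosedTwoSidedIdeal J) {j : A} (hj : j ∈ J) {ε : ℝ} (hε : 0 < ε) :
    ∃ e ∈ J, star e = e ∧ ‖j - j * e‖ ^ 2 ≤ ε := by
  set a : A := star j * j with ha
  have hsa : IsSelfAdjoint a := IsSelfAdjoint.star_mul_self j
  have haJ : a ∈ J := hJ.mul_mem_left _ _ hj
  have hne : ∀ x : ℝ, |x| + ε ≠ 0 := fun x => by positivity
  have hg : Continuous (fun x : ℝ => (|x| + ε)⁻¹) :=
    (continuous_abs.add continuous_const).inv₀ hne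
  have hxg : Continuous (fun x : ℝ => x * (|x| + ε)⁻¹) := continuous_id.mul hg
  have h1 : cfc (fun x : ℝ => x * (|x| + ε)⁻¹) a = a * cfc (fun x : ℝ => (|x| + ε)⁻¹) a := by
    rw [cfc_mul (fun x : ℝ => x) _ a continuousOn_id hg.continuousOn, cfc_id' ℝ a]
  set e : A := cfc (fun x : ℝ => x * (|x| + ε)⁻¹) a with he
  have hse : star e = e := (cfc_predicate (R := ℝ) (fun x : ℝ => x * (|x| + ε)⁻¹) a : IsSelfAdjoint _)
  refine ⟨e, ?_, hse, ?_⟩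
  · rw [h1]; exact hJ.mul_mem_right _ _ haJ
  · have h2 : (1 : A) - e = cfc (fun x : ℝ => 1 - x * (|x| + ε)⁻¹) a := by
      rw [cfc_sub (fun _ : ℝ => (1 : ℝ)) _ a continuousOn_const hxg.continuousOn,
        cfc_const_one ℝ a]
    have hc : Continuous (fun x : ℝ => 1 - x * (|x| + ε)⁻¹) := continuous_const.sub hxg
    have h3 : star (j - j * e) * (j - j * e) =
        cfc (fun x : ℝ => (1 - x * (|x| + ε)⁻¹) * x * (1 - x * (|x| + ε)⁻¹)) a := by
      rw [cfc_mul (fun x : ℝ => (1 - x * (|x| + ε)⁻¹) * x) _ a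
          (hc.mul continuous_id).continuousOn hc.continuousOn,
        cfc_mul _ (fun x : ℝ => x) a hc.continuousOn continuousOn_id, cfc_id' ℝ a, ← h2, ha]
      simp only [star_sub, star_mul, hse]
      noncomm_ring
    rw [sq, ← CStarRing.norm_star_mul_self, h3]
    refine norm_cfc_le hε.le fun x hx => ?_
    have hx0 : 0 ≤ x := spectrum_star_mul_self_nonneg (b := j) x hx
    have hp : 0 < x + ε := by positivity
    rw [abs_of_nonneg hx0]
    have : (1 - x * (x + ε)⁻¹) * x * (1 - x * (x + ε)⁻¹) = x * ε ^ 2 / (x + ε) ^ 2 := by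
      field_simp; ring
    rw [this, Real.norm_of_nonneg (by positivity), div_le_iff₀ (by positivity)]
    nlinarith [mul_nonneg hε.le (mul_nonneg hx0 hx0), mul_pos hε (mul_pos hε hε),
      mul_nonneg (mul_nonneg hε.le hε.le) hx0]

lemma ideal_closure (hJ : IsClosedTwoSidedIdeal J) {j : A} (hj : j ∈ J) :
    j ∈ closure {b : A | ∃ e ∈ J, star e = e ∧ b = j * e} := by
  rw [Metric.mem_closure_iff]
  intro δ hδ
  obtain ⟨e, he, hs, hn⟩ := ideal_approx hJ hj (ε := (δ / 2) ^ 2) (by positivity)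
  refine ⟨j * e, ⟨e, he, hs, rfl⟩, ?_⟩
  rw [dist_eq_norm]
  have := abs_le_of_sq_le_sq hn (by positivity)
  have := le_abs_self ‖j - j * e‖
  linarith [this, le_of_abs_le ‹_›]

lemma ideal_star (hJ : IsClosedTwoSidedIdeal J) {j : A} (hj : j ∈ J) : star j ∈ J := by
  have hcl : IsClosed {b : A | star b ∈ J} := hJ.isClosed.preimage continuous_star
  refine closure_minimal ?_ hcl (ideal_closure hJ hj)
  rintro b ⟨e, he, hs, rfl⟩
  change star (j * e) ∈ J
  rw [star_mul, hs]
  exact hJ.mul_mem_right _ _ he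

lemma ideal_smul (hJ : IsClosedTwoSidedIdeal J) (c : ℂ) {j : A} (hj : j ∈ J) : c • j ∈ J := by
  have := hJ.mul_mem_left (c • (1 : A)) j hj
  simpa using this

/-- The ideal as a submodule. -/
def idealSub (hJ : IsClosedTwoSidedIdeal J) : Submodule ℂ A where
  carrier := J
  zero_mem' := hJ.zero_mem
  add_mem' := fun {x y} hx hy => hJ.add_mem x hx y hy
  smul_mem' := fun c _ hx => ideal_smul hJ c hx

lemma unitize_eq (hJ : IsClosedTwoSidedIdeal J) :
    unitize A J = ((idealSub hJ ⊔ Submodule.span ℂ {(1 : A)} : Submodule ℂ A) : Set A) := by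
  ext d
  simp only [unitize, Set.mem_ofPred_eq, SetLike.mem_coe, Submodule.mem_sup,
    Submodule.mem_span_singleton]
  constructor
  · rintro ⟨j, hj, c, rfl⟩
    exact ⟨j, hj, _, ⟨c, rfl⟩, rfl⟩
  · rintro ⟨j, hj, _, ⟨c, rfl⟩, rfl⟩
    exact ⟨j, hj, c, rfl⟩

lemma unitize_closed (hJ : IsClosedTwoSidedIdeal J) : IsClosed (unitize A J) := by
  rw [unitize_eq hJ]
  have : IsClosed ((idealSub hJ : Submodule ℂ A) : Set A) := hJ.isClosed
  exact Submodule.isClosed_sup_finiteDimensional _ _ this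

lemma cstarGen_le : cstarGen A X ≤ cstarPlus A X J := fun _ ha =>
  StarSubalgebra.le_topologicalClosure _ (StarAlgebra.subset_adjoin ℂ _ (Or.inl ha))

lemma ideal_le {j : A} (hj : j ∈ J) : j ∈ cstarPlus A X J :=
  StarSubalgebra.le_topologicalClosure _ (StarAlgebra.subset_adjoin ℂ _ (Or.inr hj))

lemma sys_le {x : A} (hx : x ∈ X) : x ∈ cstarPlus A X J :=
  cstarGen_le (StarSubalgebra.le_topologicalClosure _ (StarAlgebra.subset_adjoin ℂ _ hx))

lemma opSys_le {m : Matrix (Fin 2) (Fin 2) A} (hm : m ∈ opSys A X J) : m ∈ calg A X J :=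
  StarSubalgebra.le_topologicalClosure _ (StarAlgebra.subset_adjoin ℂ _ hm)

/-- The matrix `[[a,0],[0,0]]`. -/
def corner (a : A) : Matrix (Fin 2) (Fin 2) A := !![a, 0; 0, 0]

lemma corner_add (a b : A) : corner (a + b) = corner a + corner b := by
  ext i j; fin_cases i <;> fin_cases j <;> simp [corner]

lemma corner_mul (a b : A) : corner (a * b) = corner a * corner b := by
  ext i j; fin_cases i <;> fin_cases j <;> simp [corner, Matrix.mul_apply]

lemma corner_smul (c : ℂ) (b : A) : corner (c • b) = c • corner b := by
  ext i j; fin_cases i <;> fin_cases j <;> simp [corner]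

lemma corner_star (b : A) : corner (star b) = star (corner b) := by
  ext i j; fin_cases i <;> fin_cases j <;> simp [corner, Matrix.star_apply]

lemma corner_cont : Continuous (corner : A → Matrix (Fin 2) (Fin 2) A) := by
  refine continuous_pi fun i => continuous_pi fun j => ?_
  fin_cases i <;> fin_cases j <;> simp [corner] <;> fun_prop

lemma unitize_zero (hJ : IsClosedTwoSidedIdeal J) : (0 : A) ∈ unitize A J :=
  ⟨0, hJ.zero_mem, 0, by simp⟩

lemma corner_sys (hJ : IsClosedTwoSidedIdeal J) {x : A} (hx : x ∈ X) : corner x ∈ calg A X J :=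
  opSys_le ⟨hx, hJ.zero_mem, hJ.zero_mem, unitize_zero hJ⟩

/-- Elements whose corner lies in `B(X,J)`. -/
def cornerAlg (hX : IsOperatorSystem X) (hJ : IsClosedTwoSidedIdeal J) : StarSubalgebra ℂ A where
  carrier := {a | corner a ∈ calg A X J}
  mul_mem' := fun {a b} ha hb => by
    change corner (a * b) ∈ calg A X J
    rw [corner_mul]; exact mul_mem ha hb
  add_mem' := fun {a b} ha hb => by
    change corner (a + b) ∈ calg A X J
    rw [corner_add]; exact add_mem ha hb
  algebraMap_mem' := fun c => by
    change corner (algebraMap ℂ A c) ∈ calg A X J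
    exact corner_sys hJ (by rw [Algebra.algebraMap_eq_smul_one]; exact hX.smul_mem _ _ hX.one_mem)
  star_mem' := fun {a} ha => by
    change corner (star a) ∈ calg A X J
    rw [corner_star]; exact star_mem ha

lemma calg_closed : IsClosed (calg A X J : Set (Matrix (Fin 2) (Fin 2) A)) :=
  StarSubalgebra.isClosed_topologicalClosure _

lemma corner_mem (hX : IsOperatorSystem X) (hJ : IsClosedTwoSidedIdeal J) {a : A}
    (ha : a ∈ cstarPlus A X J) : corner a ∈ calg A X J := by
  have hcl : IsClosed (cornerAlg hX hJ : Set A) := calg_closed.preimage corner_cont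
  have hle : cstarPlus A X J ≤ cornerAlg hX hJ := by
    refine StarSubalgebra.topologicalClosure_minimal (StarAlgebra.adjoin_le ?_) hcl
    rintro b (hb | hb)
    · have : cstarGen A X ≤ cornerAlg hX hJ :=
        StarSubalgebra.topologicalClosure_minimal
          (StarAlgebra.adjoin_le fun x hx => corner_sys hJ hx) hcl
      exact this hb
    · refine closure_minimal ?_ hcl (ideal_closure hJ hb)
      rintro _ ⟨e, he, -, rfl⟩
      change corner (b * e) ∈ calg A X J
      have hX0 : (0 : A) ∈ X := by simpa using hX.smul_mem 0 _ hX.one_mem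
      have h1 : (!![0, b; 0, 0] : Matrix (Fin 2) (Fin 2) A) ∈ calg A X J :=
        opSys_le ⟨hX0, hb, hJ.zero_mem, unitize_zero hJ⟩
      have h2 : (!![0, 0; e, 0] : Matrix (Fin 2) (Fin 2) A) ∈ calg A X J :=
        opSys_le ⟨hX0, hJ.zero_mem, he, unitize_zero hJ⟩
      have : corner (b * e) = !![0, b; 0, 0] * !![0, 0; e, 0] := by
        ext i j; fin_cases i <;> fin_cases j <;> simp [corner, Matrix.mul_apply]
      rw [this]; exact mul_mem h1 h2
  exact hle ha

/-- The algebra of all matrices of the form described in the context. -/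
def bigAlg (X : Set A) (hJ : IsClosedTwoSidedIdeal J) :
    StarSubalgebra ℂ (Matrix (Fin 2) (Fin 2) A) where
  carrier := {m | m 0 0 ∈ cstarPlus A X J ∧ m 0 1 ∈ J ∧ m 1 0 ∈ J ∧ m 1 1 ∈ unitize A J}
  mul_mem' := by
    rintro a b ⟨a1, a2, a3, j, hj, c, a4⟩ ⟨b1, b2, b3, k, hk, d, b4⟩
    simp only [Set.mem_ofPred_eq, Matrix.mul_apply, Fin.sum_univ_two]
    refine ⟨add_mem (mul_mem a1 b1) (ideal_le (hJ.mul_mem_left _ _ b3)),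
      hJ.add_mem _ (hJ.mul_mem_left _ _ b2) _ (hJ.mul_mem_right _ _ a2),
      hJ.add_mem _ (hJ.mul_mem_right _ _ a3) _ (hJ.mul_mem_left _ _ b3),
      a 1 0 * b 0 1 + (j * k + (d • j + c • k)), ?_, c * d, ?_⟩
    · exact hJ.add_mem _ (hJ.mul_mem_left _ _ b2) _ (hJ.add_mem _ (hJ.mul_mem_left _ _ hk) _
        (hJ.add_mem _ (ideal_smul hJ _ hj) _ (ideal_smul hJ _ hk)))
    · rw [a4, b4]
      simp only [add_mul, mul_add, smul_mul_assoc, mul_smul_comm, one_mul, mul_one, smul_add, smul_smul]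
      rw [mul_comm d c]
      abel
  add_mem' := by
    rintro a b ⟨a1, a2, a3, j, hj, c, a4⟩ ⟨b1, b2, b3, k, hk, d, b4⟩
    refine ⟨add_mem a1 b1, hJ.add_mem _ a2 _ b2, hJ.add_mem _ a3 _ b3, j + k,
      hJ.add_mem _ hj _ hk, c + d, ?_⟩
    rw [Matrix.add_apply, a4, b4, add_smul]
    abel
  algebraMap_mem' := fun c => by
    refine ⟨?_, ?_, ?_, 0, hJ.zero_mem, c, ?_⟩
    · simpa [Matrix.algebraMap_matrix_apply] using algebraMap_mem (cstarPlus A X J) c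
    · simpa [Matrix.algebraMap_matrix_apply] using hJ.zero_mem
    · simpa [Matrix.algebraMap_matrix_apply] using hJ.zero_mem
    · simp [Matrix.algebraMap_matrix_apply, Algebra.algebraMap_eq_smul_one]
  star_mem' := by
    rintro a ⟨a1, a2, a3, j, hj, c, a4⟩
    refine ⟨star_mem a1, ideal_star hJ a3, ideal_star hJ a2, star j, ideal_star hJ hj, star c, ?_⟩
    rw [Matrix.star_apply, a4]
    simp

lemma calg_le (hJ : IsClosedTwoSidedIdeal J) : calg A X J ≤ bigAlg X hJ := by
  refine StarSubalgebra.topologicalClosure_minimal (StarAlgebra.adjoin_le ?_) ?_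
  · rintro m ⟨h1, h2, h3, h4⟩
    exact ⟨sys_le h1, h2, h3, h4⟩
  · have hc : ∀ i j : Fin 2, Continuous fun m : Matrix (Fin 2) (Fin 2) A => m i j :=
      fun i j => (continuous_apply j).comp (continuous_apply i)
    have h0 : IsClosed (cstarPlus A X J : Set A) := StarSubalgebra.isClosed_topologicalClosure _
    exact (h0.preimage (hc 0 0)).inter ((hJ.isClosed.preimage (hc 0 1)).inter
      ((hJ.isClosed.preimage (hc 1 0)).inter ((unitize_closed hJ).preimage (hc 1 1))))

end Helpers

/-- Lemma 2.5: (i) every unital *-representation `ρ` of `B(X,J)`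
annihilating `M₂(J)` admits a unique *-representation `π` of `C*(X)+J` annihilating `J`
such that the pair `(ρ, π)` is `(X,J)`-adapted; (ii) every unital *-representation `π` of
`C*(X)+J` annihilating `J` admits a unique unital *-representation `ρ` of `B(X,J)`
annihilating `M₂(J)` such that the pair `(ρ, π)` is `(X,J)`-adapted. -/
theorem stmt4 {A : Type*} [CStarAlgebra A] (X J : Set A)
    (hX : IsOperatorSystem X) (hJ : IsClosedTwoSidedIdeal J)
    {H : Type*} [NormedAddCommGroup H] [InnerProductSpace ℂ H] [CompleteSpace H] :
    -- (i)
    (∀ ρ : ↥(calg A X J) → (H →L[ℂ] H), IsUnitalStarRep ρ → AnnihilatesM2 X J ρ →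
      ∃! π : ↥(cstarPlus A X J) → (H →L[ℂ] H),
        IsStarRep π ∧ AnnihilatesJ X J π ∧ IsAdaptedPair X J ρ π) ∧
    -- (ii)
    (∀ π : ↥(cstarPlus A X J) → (H →L[ℂ] H), IsUnitalStarRep π → AnnihilatesJ X J π →
      ∃! ρ : ↥(calg A X J) → (H →L[ℂ] H),
        IsUnitalStarRep ρ ∧ AnnihilatesM2 X J ρ ∧ IsAdaptedPair X J ρ π) := by
  constructor
  · intro ρ hρ hann
    have hr := hρ.toIsStarRep
    refine ⟨fun a => ρ ⟨corner (a : A), corner_mem hX hJ a.2⟩, ⟨⟨?_, ?_, ?_, ?_⟩, ?_, ?_⟩, ?_⟩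
    · intro x y
      rw [← hr.map_add]
      exact congrArg ρ (Subtype.ext (corner_add _ _))
    · intro c x
      rw [← hr.map_smul]
      exact congrArg ρ (Subtype.ext (corner_smul _ _))
    · intro x y
      rw [← hr.map_mul]
      exact congrArg ρ (Subtype.ext (corner_mul _ _))
    · intro x
      rw [← hr.map_star]
      exact congrArg ρ (Subtype.ext (corner_star _))
    · intro x hx
      refine hann _ fun i j => ?_
      fin_cases i <;> fin_cases j <;> simp [corner, hx, hJ.zero_mem]
    · intro m c a' hm ha'
      obtain ⟨-, h2, h3, -⟩ := calg_le hJ m.2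
      have hz : ρ (m - (c • 1 + ⟨corner (a' : A), corner_mem hX hJ a'.2⟩)) = 0 := by
        refine hann _ fun i j => ?_
        fin_cases i <;> fin_cases j <;>
          simp [corner, ha', hJ.zero_mem, h2, h3, hm]
      have : m = (m - (c • 1 + ⟨corner (a' : A), corner_mem hX hJ a'.2⟩)) +
          (c • 1 + ⟨corner (a' : A), corner_mem hX hJ a'.2⟩) := by abel
      rw [this, hr.map_add, hz, hr.map_add, hr.map_smul, hρ.map_one]
      abel
    · rintro π ⟨-, -, had⟩
      funext a
      have := had ⟨corner (a : A), corner_mem hX hJ a.2⟩ 0 a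
        (by simp [corner, hJ.zero_mem]) (by simp [corner])
      rw [← this]
      simp
  · intro π hπ hann
    have hr := hπ.toIsStarRep
    refine ⟨fun m => π ⟨(m : Matrix (Fin 2) (Fin 2) A) 0 0, (calg_le hJ m.2).1⟩,
      ⟨⟨⟨?_, ?_, ?_, ?_⟩, ?_⟩, ?_, ?_⟩, ?_⟩
    · intro x y
      rw [← hr.map_add]
      rfl
    · intro c x
      rw [← hr.map_smul]
      rfl
    · intro x y
      have hk : (x : Matrix (Fin 2) (Fin 2) A) 0 1 * (y : Matrix (Fin 2) (Fin 2) A) 1 0 ∈ J :=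
        hJ.mul_mem_left _ _ (calg_le hJ y.2).2.2.1
      have hz := hann ⟨_, ideal_le hk⟩ hk
      rw [← hr.map_mul, ← add_zero (π (_ * _)), ← hz, ← hr.map_add]
      refine congrArg π (Subtype.ext ?_)
      simp [Matrix.mul_apply, Fin.sum_univ_two]
    · intro x
      rw [← hr.map_star]
      rfl
    · rw [← hπ.map_one]
      exact congrArg π (Subtype.ext (by simp))
    · intro m hm
      exact hann _ (hm 0 0)
    · intro m c a' hm ha'
      have : (⟨(m : Matrix (Fin 2) (Fin 2) A) 0 0, (calg_le hJ m.2).1⟩ : cstarPlus A X J) =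
          a' + c • 1 := Subtype.ext (by simp [ha'])
      simp only [this]
      rw [hr.map_add, hr.map_smul, hπ.map_one]
      abel
    · rintro ρ ⟨-, -, had⟩
      funext m
      obtain ⟨h1, -, -, j, hj, c, h4⟩ := calg_le hJ m.2
      have := had m c (⟨(m : Matrix (Fin 2) (Fin 2) A) 0 0, h1⟩ - c • 1)
        (by rw [h4]; simpa using hj) (by simp)
      have h5 : (⟨(m : Matrix (Fin 2) (Fin 2) A) 0 0, h1⟩ : cstarPlus A X J) =
          (⟨(m : Matrix (Fin 2) (Fin 2) A) 0 0, h1⟩ - c • 1) + c • 1 := by abel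
      change ρ m = π ⟨(m : Matrix (Fin 2) (Fin 2) A) 0 0, h1⟩
      rw [h5, hr.map_add, ← this, hr.map_smul, hπ.map_one]
      abel

end ArvesonCounterexample
end
end
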